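/- Let ℓ ∈ ℝ and let (x_n)_{n≥1} be a bounded real sequence with x_n ≥ ℓ for all n ≥ 1. Then (x_n) is Cesàro convergent to ℓ if and only if there exists some real number α > 1 such that lim_{k→∞} (1/(α^{k+1} − α^k)) · Σ_{α^k ≤ i < α^{k+1}} x_i = ℓ, where the sum ranges over positive integers i with α^k ≤ i < α^{k+1}. -/

import Mathlib

open Filter

lemma aux_den {α : ℝ} (hα : 1 < α) : Tendsto (fun k : ℕ => α ^ (k + 1) - α ^ k) atTop atTop := by
  have h : (fun k : ℕ => α ^ (k + 1) - α ^ k) = fun k : ℕ => (α - 1) * α ^ k := by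
    funext k; ring
  rw [h]
  exact (tendsto_pow_atTop_atTop_of_one_lt hα).const_mul_atTop (by linarith)

lemma aux_den_pos {α : ℝ} (hα : 1 < α) (k : ℕ) : 0 < α ^ (k + 1) - α ^ k := by
  have : α ^ (k + 1) - α ^ k = (α - 1) * α ^ k := by ring
  rw [this]
  have : 0 < α - 1 := by linarith
  positivity

lemma aux_ceil_mono {α : ℝ} (hα : 1 < α) (k : ℕ) : ⌈α ^ k⌉₊ ≤ ⌈α ^ (k + 1)⌉₊ :=
  Nat.ceil_mono (by linarith [aux_den_pos hα k])

lemma aux_ratio {α : ℝ} (hα : 1 < α) :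
    Tendsto (fun k : ℕ => (1 / (α ^ (k + 1) - α ^ k)) *
      ((⌈α ^ (k + 1)⌉₊ : ℝ) - (⌈α ^ k⌉₊ : ℝ))) atTop (nhds 1) := by
  have hinv : Tendsto (fun k : ℕ => 1 / (α ^ (k + 1) - α ^ k)) atTop (nhds 0) := by
    simp only [one_div]
    exact (aux_den hα).inv_tendsto_atTop
  rw [tendsto_iff_norm_sub_tendsto_zero]
  refine squeeze_zero (fun _ => norm_nonneg _) (fun k => ?_) hinv
  have hD := aux_den_pos hα k
  have p0 : (0 : ℝ) ≤ α ^ k := by positivity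
  have p1 : (0 : ℝ) ≤ α ^ (k + 1) := by positivity
  have a1 := Nat.le_ceil (α ^ k)
  have a2 := Nat.ceil_lt_add_one p0
  have b1 := Nat.le_ceil (α ^ (k + 1))
  have b2 := Nat.ceil_lt_add_one p1
  have e : (1 / (α ^ (k + 1) - α ^ k)) * ((⌈α ^ (k + 1)⌉₊ : ℝ) - (⌈α ^ k⌉₊ : ℝ)) - 1
      = (1 / (α ^ (k + 1) - α ^ k)) *
        (((⌈α ^ (k + 1)⌉₊ : ℝ) - (⌈α ^ k⌉₊ : ℝ)) - (α ^ (k + 1) - α ^ k)) := by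
    rw [mul_sub _ _ (α ^ (k + 1) - α ^ k), one_div_mul_cancel hD.ne']
  rw [e, Real.norm_eq_abs, abs_mul, abs_of_pos (one_div_pos.2 hD)]
  apply mul_le_of_le_one_right (one_div_pos.2 hD).le
  rw [abs_le]; constructor <;> linarith

lemma aux_block {α : ℝ} (hα : 1 < α) (x : ℕ → ℝ) (ℓ : ℝ) :
    Tendsto (fun k : ℕ =>
            (1 / (α ^ (k + 1) - α ^ k)) * ∑ i ∈ Finset.Ico ⌈α ^ k⌉₊ ⌈α ^ (k + 1)⌉₊, x i)
          atTop (nhds ℓ) ↔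
    Tendsto (fun k : ℕ =>
            (1 / (α ^ (k + 1) - α ^ k)) * ∑ i ∈ Finset.Ico ⌈α ^ k⌉₊ ⌈α ^ (k + 1)⌉₊, (x i - ℓ))
          atTop (nhds 0) := by
  have hr := (aux_ratio hα).mul_const ℓ
  rw [one_mul] at hr
  have key : ∀ k : ℕ, (1 / (α ^ (k + 1) - α ^ k)) *
        ∑ i ∈ Finset.Ico ⌈α ^ k⌉₊ ⌈α ^ (k + 1)⌉₊, (x i - ℓ) =
      (1 / (α ^ (k + 1) - α ^ k)) * ∑ i ∈ Finset.Ico ⌈α ^ k⌉₊ ⌈α ^ (k + 1)⌉₊, x i -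
      (1 / (α ^ (k + 1) - α ^ k)) *
      ((⌈α ^ (k + 1)⌉₊ : ℝ) - (⌈α ^ k⌉₊ : ℝ)) * ℓ := by
    intro k
    rw [Finset.sum_sub_distrib, Finset.sum_const, Nat.card_Ico, nsmul_eq_mul,
      Nat.cast_sub (aux_ceil_mono hα k)]
    ring
  constructor
  · intro h
    have := h.sub hr
    rw [sub_self] at this
    exact this.congr (fun k => (key k).symm)
  · intro h
    have := h.add hr
    rw [zero_add] at this
    refine this.congr (fun k => ?_)
    rw [key k]; ring

lemma aux_cesaro (x : ℕ → ℝ) (ℓ : ℝ) :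
    Tendsto (fun n : ℕ => (1 / (n : ℝ)) * ∑ i ∈ Finset.Icc 1 n, x i) atTop (nhds ℓ) ↔
    Tendsto (fun n : ℕ => (1 / (n : ℝ)) * ∑ i ∈ Finset.Icc 1 n, (x i - ℓ)) atTop (nhds 0) := by
  rw [← tendsto_sub_nhds_zero_iff]
  apply tendsto_congr'
  filter_upwards [eventually_gt_atTop 0] with n hn
  have : (n : ℝ) ≠ 0 := by positivity
  rw [Finset.sum_sub_distrib, Finset.sum_const, Nat.card_Icc, nsmul_eq_mul]
  simp only [Nat.add_sub_cancel]
  field_simp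

/-- A bounded real sequence with `x n ≥ ℓ` for all `n ≥ 1` is Cesàro convergent to `ℓ` iff
for some `α > 1` the block averages over `[α^k, α^(k+1))` converge to `ℓ`. -/
theorem cesaro_iff_exists_block_avg_of_ge (x : ℕ → ℝ) (ℓ : ℝ)
    (hbdd : ∃ C : ℝ, ∀ n : ℕ, 1 ≤ n → |x n| ≤ C)
    (hge : ∀ n : ℕ, 1 ≤ n → ℓ ≤ x n) :
    Tendsto (fun n : ℕ => (1 / (n : ℝ)) * ∑ i ∈ Finset.Icc 1 n, x i) atTop (nhds ℓ) ↔
      ∃ α : ℝ, 1 < α ∧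
        Tendsto (fun k : ℕ =>
            (1 / (α ^ (k + 1) - α ^ k)) * ∑ i ∈ Finset.Ico ⌈α ^ k⌉₊ ⌈α ^ (k + 1)⌉₊, x i)
          atTop (nhds ℓ) := by
  rw [aux_cesaro]
  constructor
  · intro h
    refine ⟨2, one_lt_two, ?_⟩
    rw [aux_block one_lt_two]
    have hc : ∀ k : ℕ, ⌈(2 : ℝ) ^ k⌉₊ = 2 ^ k := by
      intro k
      have : ((2 : ℝ) ^ k) = ((2 ^ k : ℕ) : ℝ) := by push_cast; rfl
      rw [this, Nat.ceil_natCast]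
    have h2 : Tendsto (fun k : ℕ => 2 ^ (k + 1)) atTop (atTop : Filter ℕ) :=
      (tendsto_pow_atTop_atTop_of_one_lt (one_lt_two)).comp (tendsto_add_atTop_nat 1)
    have h3 := (h.comp h2).const_mul 2
    rw [mul_zero] at h3
    have pos1 : ∀ k : ℕ, 1 ≤ 2 ^ k := fun k => Nat.one_le_two_pow
    refine squeeze_zero (fun k => ?_) (fun k => ?_) h3
    · apply mul_nonneg (one_div_pos.2 (aux_den_pos one_lt_two k)).le
      apply Finset.sum_nonneg
      intro i hi
      rw [hc, hc, Finset.mem_Ico] at hi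
      linarith [hge i ((pos1 k).trans hi.1)]
    · rw [hc, hc]
      have e : (2 : ℝ) ^ (k + 1) - 2 ^ k = 2 ^ k := by ring
      have e2 : 2 * (1 / (2 : ℝ) ^ (k + 1)) = 1 / 2 ^ k := by
        rw [pow_succ]; field_simp
      simp only [Function.comp]
      push_cast
      rw [e, ← mul_assoc, e2]
      apply mul_le_mul_of_nonneg_left _ (by positivity)
      apply Finset.sum_le_sum_of_subset_of_nonneg
      · intro i hi
        rw [Finset.mem_Ico] at hi
        rw [Finset.mem_Icc]
        exact ⟨(pos1 k).trans hi.1, hi.2.le⟩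
      · intro i hi _
        rw [Finset.mem_Icc] at hi
        linarith [hge i hi.1]
  · rintro ⟨α, hα, h⟩
    rw [aux_block hα] at h
    have hα0 : 0 < α := by linarith
    have hlo : (fun k : ℕ => ∑ i ∈ Finset.Ico ⌈α ^ k⌉₊ ⌈α ^ (k + 1)⌉₊, (x i - ℓ))
        =o[atTop] (fun k : ℕ => α ^ (k + 1) - α ^ k) := by
      rw [Asymptotics.isLittleO_iff_tendsto (fun k hk => absurd hk (aux_den_pos hα k).ne')]
      exact h.congr (fun k => by ring)
    have hsum : ∀ K : ℕ, ∑ k ∈ Finset.range K, (α ^ (k + 1) - α ^ k) = α ^ K - 1 := by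
      intro K
      rw [Finset.sum_range_sub (fun k => α ^ k)]; simp
    have hT : ∀ K : ℕ, ∑ k ∈ Finset.range K,
        ∑ i ∈ Finset.Ico ⌈α ^ k⌉₊ ⌈α ^ (k + 1)⌉₊, (x i - ℓ)
        = ∑ i ∈ Finset.Ico 1 ⌈α ^ K⌉₊, (x i - ℓ) := by
      intro K
      induction K with
      | zero => simp
      | succ K ih =>
        rw [Finset.sum_range_succ, ih, Finset.sum_Ico_consecutive _ _ (aux_ceil_mono hα K)]
        exact Nat.one_le_ceil_iff.2 (by positivity)
    have hs := hlo.sum_range (fun k => (aux_den_pos hα k).le) (by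
      simp only [hsum]
      exact tendsto_atTop_add_const_right _ (-1) (tendsto_pow_atTop_atTop_of_one_lt hα))
    simp only [hsum, hT] at hs
    rw [Metric.tendsto_atTop]
    intro ε hε
    have hev := hs.bound (c := ε / (2 * α)) (by positivity)
    obtain ⟨K0, hK0⟩ := eventually_atTop.1 hev
    refine ⟨max 1 ⌈α ^ K0⌉₊, fun n hn => ?_⟩
    have hn1 : 1 ≤ n := (le_max_left _ _).trans hn
    have hn2 : α ^ K0 ≤ n := Nat.ceil_le.1 ((le_max_right _ _).trans hn)
    have hnR : (1 : ℝ) ≤ n := by exact_mod_cast hn1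
    obtain ⟨K, hK1, hK2⟩ := exists_nat_pow_near hnR hα
    have hKK : K0 < K + 1 := (pow_lt_pow_iff_right₀ hα).1 (hn2.trans_lt hK2)
    have hb := hK0 (K + 1) hKK.le
    have hnn : 0 ≤ ∑ i ∈ Finset.Icc 1 n, (x i - ℓ) := Finset.sum_nonneg fun i hi => by
      linarith [hge i (Finset.mem_Icc.1 hi).1]
    have hle : ∑ i ∈ Finset.Icc 1 n, (x i - ℓ) ≤ ∑ i ∈ Finset.Ico 1 ⌈α ^ (K + 1)⌉₊, (x i - ℓ) := by
      apply Finset.sum_le_sum_of_subset_of_nonneg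
      · intro i hi
        rw [Finset.mem_Icc] at hi
        rw [Finset.mem_Ico]
        exact ⟨hi.1, hi.2.trans_lt (Nat.lt_ceil.2 hK2)⟩
      · intro i hi _
        linarith [hge i (Finset.mem_Ico.1 hi).1]
    have h1 : (1 : ℝ) ≤ α ^ (K + 1) := one_le_pow₀ hα.le
    rw [Real.norm_eq_abs, Real.norm_eq_abs, abs_of_nonneg (by linarith : 0 ≤ α ^ (K + 1) - 1)] at hb
    have hb2 := (le_abs_self _).trans hb
    rw [Real.dist_eq, sub_zero, abs_of_nonneg (by positivity), one_div_mul_eq_div,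
      div_lt_iff₀ (by linarith)]
    have hfin : ε / (2 * α) * (α ^ (K + 1) - 1) ≤ ε / 2 * n := by
      calc ε / (2 * α) * (α ^ (K + 1) - 1) ≤ ε / (2 * α) * α ^ (K + 1) := by
            apply mul_le_mul_of_nonneg_left (by linarith) (by positivity)
        _ = ε / 2 * α ^ K := by rw [pow_succ]; field_simp
        _ ≤ ε / 2 * n := mul_le_mul_of_nonneg_left hK1 (by positivity)
    have : 0 < ε * n := by positivity
    linarith
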